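/- The eigenvalues of the Laplacian ∇_A^* ∇_A of the SO(3)-invariant connection m A₀ on the line bundle H^m over S² (H the Hopf line bundle, A₀ the invariant connection with harmonic curvature) are (l(l+2) − m²)/4 for l = |m| + 2j, j = 0, 1, 2, …, each with multiplicity l + 1. -/

import Mathlib

noncomputable section

open scoped BigOperators

abbrev E4 := EuclideanSpace ℝ (Fin 4)

/-- The circle action `e^{is}·(z₁, z₂) = (e^{is} z₁, e^{−is} z₂)` on `ℂ² = ℝ⁴`,
`z₁ = x₀ + i x₁`, `z₂ = x₂ + i x₃`; the Hopf fibration `S³ → S²` is its restriction to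
the unit sphere. -/
def hopfAct (s : ℝ) (x : E4) : E4 :=
  (WithLp.equiv 2 (Fin 4 → ℝ)).symm
    ![Real.cos s * x 0 - Real.sin s * x 1,
      Real.sin s * x 0 + Real.cos s * x 1,
      Real.cos s * x 2 + Real.sin s * x 3,
      -Real.sin s * x 2 + Real.cos s * x 3]

/-- The flat Laplacian (sum of second derivatives) on ℝ⁴, for ℂ-valued functions. -/
def lap4 (f : E4 → ℂ) (x : E4) : ℂ :=
  ∑ i : Fin 4,
    fderiv ℝ (fun y => fderiv ℝ f y (EuclideanSpace.single i 1)) x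
      (EuclideanSpace.single i 1)

/-- Smooth sections of the line bundle `H^m` over the unit round `S²` (`H` the Hopf,
i.e. degree-1, line bundle) are exactly the weight-`m` equivariant functions on the unit
sphere `S³ ⊂ ℂ²`, extended 0-homogeneously to `ℝ⁴ \ {0}`.  On such functions the rough
Laplacian `∇_A^*∇_A` of the SO(3)-invariant connection `m A₀` (with harmonic curvature
`(i/2) m dv_{S²}`) is the horizontal Laplacian `(1/4)(Δ_{S³} − m²)`, where
`Δ_{S³} f = −(Σᵢ ∂ᵢ² f)|_{S³}` for the 0-homogeneous extension.
`IsEigenSection m μ f` states that `f` represents an eigensection of `∇_A^*∇_A` on `H^m`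
with eigenvalue `μ`. -/
def IsEigenSection (m : ℤ) (μ : ℝ) (f : E4 → ℂ) : Prop :=
  ContDiffOn ℝ (⊤ : ℕ∞) f {x : E4 | x ≠ 0} ∧
  (∀ c : ℝ, 0 < c → ∀ x : E4, f (c • x) = f x) ∧
  (∀ (s : ℝ) (x : E4), f (hopfAct s x) = Complex.exp (Complex.I * (m : ℂ) * (s : ℂ)) * f x) ∧
  (∀ x : E4, ‖x‖ = 1 → (1 / 4 : ℂ) * (-(lap4 f x) - (m : ℂ) ^ 2 * f x) = (μ : ℂ) * f x)

open MvPolynomial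

/-- The value at `x : ℝ⁴` of a polynomial in four variables with complex coefficients. -/
def polyEval (x : E4) : MvPolynomial (Fin 4) ℂ →ₐ[ℂ] ℂ :=
  MvPolynomial.aeval fun i => ((x i : ℝ) : ℂ)

/-- The function `x ↦ ‖x‖⁻ᵏ`, with complex values. -/
def invNormPow (k : ℕ) (x : E4) : ℂ := (((‖x‖ : ℝ) : ℂ) ^ k)⁻¹

/-- The Laplacian of a polynomial in four variables. -/
def polyLap (p : MvPolynomial (Fin 4) ℂ) : MvPolynomial (Fin 4) ℂ :=
  ∑ i, pderiv i (pderiv i p)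

lemma polyEval_X (x : E4) (i : Fin 4) : polyEval x (X i) = ((x i : ℝ) : ℂ) := by
  simp [polyEval]

lemma polyEval_C (x : E4) (a : ℂ) : polyEval x (C a) = a := by
  simp [polyEval]

lemma contDiff_polyEval (p : MvPolynomial (Fin 4) ℂ) {n : WithTop ℕ∞} :
    ContDiff ℝ n fun x => polyEval x p := by
  induction p using MvPolynomial.induction_on with
  | C a => simpa only [polyEval_C] using contDiff_const
  | add p q hp hq => simpa only [map_add] using hp.add hq
  | mul_X p i hp =>
    simp only [map_mul, polyEval_X]
    refine hp.mul (Complex.ofRealCLM.contDiff.comp ?_)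
    exact (EuclideanSpace.proj i : E4 →L[ℝ] ℝ).contDiff

lemma fderiv_polyEval_single (p : MvPolynomial (Fin 4) ℂ) (x : E4) (i : Fin 4) :
    fderiv ℝ (fun y => polyEval y p) x (EuclideanSpace.single i 1) = polyEval x (pderiv i p) := by
  have hd : ∀ (q : MvPolynomial (Fin 4) ℂ), DifferentiableAt ℝ (fun y => polyEval y q) x :=
    fun q => (contDiff_polyEval q (n := 1)).differentiable (by simp) x
  induction p using MvPolynomial.induction_on with
  | C a => simp
  | add p q hp hq =>
    simp only [map_add]
    rw [fderiv_fun_add (hd p) (hd q)]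
    simp [hp, hq]
  | mul_X p j hp =>
    simp only [map_mul]
    rw [fderiv_fun_mul (hd p) (hd _)]
    have hX : fderiv ℝ (fun y => polyEval y (X j)) x (EuclideanSpace.single i 1)
        = if j = i then 1 else 0 := by
      have h : (fun y : E4 => polyEval y (X j))
          = (Complex.ofRealCLM.comp (EuclideanSpace.proj j : E4 →L[ℝ] ℝ)) := by
        funext y; simp [polyEval_X]
      rw [h, ContinuousLinearMap.fderiv]
      by_cases hji : j = i <;> simp [hji]
    simp only [_root_.add_apply, _root_.smul_apply, hX, hp,
      Derivation.leibniz, pderiv_X, smul_eq_mul, map_add, map_mul]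
    by_cases hji : j = i
    · subst hji; simp
    · simp [hji]

lemma hasFDerivAt_norm_single {x : E4} (hx : x ≠ 0) :
    ∃ L : E4 →L[ℝ] ℝ, HasFDerivAt (fun y : E4 => ‖y‖) L x ∧
      ∀ i, L (EuclideanSpace.single i 1) = x i / ‖x‖ := by
  have hd : DifferentiableAt ℝ (fun y : E4 => ‖y‖) x :=
    (contDiffAt_norm ℝ hx (n := 1)).differentiableAt (by simp)
  refine ⟨_, hd.hasFDerivAt, fun i => ?_⟩
  have h1 := (hasStrictFDerivAt_norm_sq x).hasFDerivAt
  have h2 := hd.hasFDerivAt.pow 2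
  have h := congrArg (fun L : E4 →L[ℝ] ℝ => L (EuclideanSpace.single i 1)) (h1.unique h2)
  have hn : ‖x‖ ≠ 0 := norm_ne_zero_iff.mpr hx
  simp [EuclideanSpace.inner_single_right] at h
  field_simp
  linarith

lemma contDiffAt_invNormPow (k : ℕ) {x : E4} (hx : x ≠ 0) {n : WithTop ℕ∞} :
    ContDiffAt ℝ n (invNormPow k) x := by
  unfold invNormPow
  refine ContDiffAt.inv (ContDiffAt.pow ?_ k) (by simp [hx])
  exact Complex.ofRealCLM.contDiff.contDiffAt.comp x (contDiffAt_norm ℝ hx)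

lemma fderiv_invNormPow_single (k : ℕ) {x : E4} (hx : x ≠ 0) (i : Fin 4) :
    fderiv ℝ (invNormPow k) x (EuclideanSpace.single i 1)
      = -(k : ℂ) * ((x i : ℝ) : ℂ) * invNormPow (k + 2) x := by
  obtain ⟨L, hL, hLi⟩ := hasFDerivAt_norm_single hx
  have hn : ‖x‖ ≠ 0 := norm_ne_zero_iff.mpr hx
  have h1 : HasFDerivAt (fun y : E4 => (‖y‖ ^ k)⁻¹) _ x :=
    ((hasDerivAt_pow k ‖x‖).fun_inv (pow_ne_zero k hn)).comp_hasFDerivAt x hL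
  have h2 := (Complex.ofRealCLM.hasFDerivAt (x := (‖x‖ ^ k)⁻¹)).comp x h1
  have h3 : (Complex.ofRealCLM ∘ fun y : E4 => (‖y‖ ^ k)⁻¹) = invNormPow k := by
    funext y
    simp [invNormPow]
  rw [h3] at h2
  rw [h2.fderiv]
  have hn' : ((‖x‖ : ℝ) : ℂ) ≠ 0 := by exact_mod_cast hn
  rcases k with _ | k
  · simp [invNormPow]
  · simp [hLi, invNormPow]
    field_simp
    ring

lemma normSq_eq_sum (x : E4) : ((‖x‖ : ℝ) : ℂ) ^ 2 = ∑ i, ((x i : ℝ) : ℂ) ^ 2 := by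
  have := EuclideanSpace.real_norm_sq_eq x
  exact_mod_cast this

lemma invNormPow_add (k j : ℕ) {x : E4} (hx : x ≠ 0) :
    ((‖x‖ : ℝ) : ℂ) ^ j * invNormPow (k + j) x = invNormPow k x := by
  have hn : ((‖x‖ : ℝ) : ℂ) ≠ 0 := by simpa using hx
  simp only [invNormPow]
  field_simp
  ring

lemma contDiffAt_polyEval_mul_invNormPow (p : MvPolynomial (Fin 4) ℂ) (k : ℕ) {x : E4}
    (hx : x ≠ 0) {n : WithTop ℕ∞} :
    ContDiffAt ℝ n (fun y => polyEval y p * invNormPow k y) x :=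
  (contDiff_polyEval p).contDiffAt.mul (contDiffAt_invNormPow k hx)

lemma fderiv_polyEval_mul_invNormPow_single (p : MvPolynomial (Fin 4) ℂ) (k : ℕ) {x : E4}
    (hx : x ≠ 0) (i : Fin 4) :
    fderiv ℝ (fun y => polyEval y p * invNormPow k y) x (EuclideanSpace.single i 1)
      = polyEval x (pderiv i p) * invNormPow k x
        - k * (polyEval x (X i * p) * invNormPow (k + 2) x) := by
  rw [fderiv_fun_mul ((contDiff_polyEval p (n := 1)).differentiable (by simp) x)
    ((contDiffAt_invNormPow k hx (n := 1)).differentiableAt (by simp))]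
  simp only [_root_.add_apply, _root_.smul_apply,
    fderiv_polyEval_single, fderiv_invNormPow_single k hx, smul_eq_mul, map_mul, polyEval_X]
  ring

/-- The flat Laplacian of the `0`-homogeneous function `p / ‖x‖ᵈ`, where `p` is a homogeneous
polynomial of degree `d`. -/
lemma lap4_polyEval_mul_invNormPow {p : MvPolynomial (Fin 4) ℂ} {d : ℕ}
    (hp : p.IsHomogeneous d) {x : E4} (hx : x ≠ 0) :
    lap4 (fun y => polyEval y p * invNormPow d y) x
      = polyEval x (polyLap p) * invNormPow d x
        - d * (d + 2) * (polyEval x p * invNormPow (d + 2) x) := by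
  have key : ∀ i : Fin 4,
      fderiv ℝ (fun y => fderiv ℝ (fun y => polyEval y p * invNormPow d y) y
        (EuclideanSpace.single i 1)) x (EuclideanSpace.single i 1)
      = polyEval x (pderiv i (pderiv i p)) * invNormPow d x
        - d * (polyEval x p + 2 * polyEval x (X i * pderiv i p)) * invNormPow (d + 2) x
        + d * (d + 2) * ((x i : ℝ) : ℂ) ^ 2 * (polyEval x p) * invNormPow (d + 4) x := by
    intro i
    have hev : (fun y => fderiv ℝ (fun y => polyEval y p * invNormPow d y) y
        (EuclideanSpace.single i 1)) =ᶠ[nhds x] fun y =>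
          polyEval y (pderiv i p) * invNormPow d y
          - d * (polyEval y (X i * p) * invNormPow (d + 2) y) := by
      filter_upwards [isOpen_ne.mem_nhds hx] with y hy
      exact fderiv_polyEval_mul_invNormPow_single p d hy i
    have hd : ∀ (q : MvPolynomial (Fin 4) ℂ) (k : ℕ),
        DifferentiableAt ℝ (fun y => polyEval y q * invNormPow k y) x :=
      fun q k => (contDiffAt_polyEval_mul_invNormPow q k hx (n := 1)).differentiableAt (by simp)
    rw [hev.fderiv_eq, fderiv_fun_sub (hd _ _) ((hd _ _).const_mul _),
      fderiv_const_mul (hd _ _)]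
    simp only [_root_.sub_apply, _root_.smul_apply,
      fderiv_polyEval_mul_invNormPow_single _ _ hx, smul_eq_mul]
    simp only [Derivation.leibniz, pderiv_X_self, smul_eq_mul, map_mul, map_add, polyEval_X,
      map_one]
    push_cast
    ring
  have hE := congrArg (polyEval x) hp.sum_X_mul_pderiv
  simp only [map_sum, nsmul_eq_mul, map_mul, map_natCast, polyEval_X] at hE
  have hN : invNormPow (d + 2) x = (∑ i, ((x i : ℝ) : ℂ) ^ 2) * invNormPow (d + 4) x := by
    rw [← normSq_eq_sum, invNormPow_add (d + 2) 2 hx]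
  simp only [lap4, key, polyLap, map_add, map_mul, polyEval_X, Fin.sum_univ_four] at hE hN ⊢
  linear_combination (-2 * d * invNormPow (d + 2) x) * hE - d * (d + 2) * polyEval x p * hN

/-- The coordinate `z₁ = x₀ + i x₁` as a polynomial. -/
def polyZ₁ : MvPolynomial (Fin 4) ℂ := X 0 + C Complex.I * X 1

/-- The conjugate coordinate `z̄₁ = x₀ - i x₁` as a polynomial. -/
def polyZ₁bar : MvPolynomial (Fin 4) ℂ := X 0 - C Complex.I * X 1

/-- The coordinate `z₂ = x₂ + i x₃` as a polynomial. -/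
def polyZ₂ : MvPolynomial (Fin 4) ℂ := X 2 + C Complex.I * X 3

/-- The conjugate coordinate `z̄₂ = x₂ - i x₃` as a polynomial. -/
def polyZ₂bar : MvPolynomial (Fin 4) ℂ := X 2 - C Complex.I * X 3

/-- The monomial `z₁ᵃ z̄₁ᵇ z₂ᶜ z̄₂ᵉ`. -/
def zMonomial (a b c e : ℕ) : MvPolynomial (Fin 4) ℂ :=
  polyZ₁ ^ a * polyZ₁bar ^ b * polyZ₂ ^ c * polyZ₂bar ^ e

/-- The derivation `2 ∂/∂z` for the complex coordinate `z = xᵢ + i xⱼ`. -/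
def dZ (i j : Fin 4) : Derivation ℂ (MvPolynomial (Fin 4) ℂ) (MvPolynomial (Fin 4) ℂ) :=
  pderiv i - Complex.I • pderiv j

/-- The derivation `2 ∂/∂z̄` for the complex coordinate `z = xᵢ + i xⱼ`. -/
def dZbar (i j : Fin 4) : Derivation ℂ (MvPolynomial (Fin 4) ℂ) (MvPolynomial (Fin 4) ℂ) :=
  pderiv i + Complex.I • pderiv j

lemma C_I_mul_C_I : (C Complex.I * C Complex.I : MvPolynomial (Fin 4) ℂ) = -1 := by
  rw [← C_mul, Complex.I_mul_I, C_neg, C_1]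

lemma pderiv_pderiv_comm (i j : Fin 4) (p : MvPolynomial (Fin 4) ℂ) :
    pderiv i (pderiv j p) = pderiv j (pderiv i p) := by
  have h : ⁅pderiv (R := ℂ) i, pderiv (R := ℂ) j⁆ = 0 := by
    refine MvPolynomial.derivation_ext fun k => ?_
    simp [Derivation.commutator_apply, pderiv_X, Pi.single_apply, apply_ite]
  have h2 := DFunLike.congr_fun h p
  simpa [Derivation.commutator_apply, sub_eq_zero] using h2

lemma dZ_dZbar (i j : Fin 4) (p : MvPolynomial (Fin 4) ℂ) :
    dZ i j (dZbar i j p) = pderiv i (pderiv i p) + pderiv j (pderiv j p) := by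
  simp only [dZ, dZbar, Derivation.add_apply, Derivation.sub_apply, Derivation.smul_apply,
    smul_eq_C_mul, map_add, Derivation.leibniz, pderiv_C, smul_eq_mul, pderiv_pderiv_comm i j]
  linear_combination -(pderiv j (pderiv j p)) * C_I_mul_C_I

lemma polyLap_eq (p : MvPolynomial (Fin 4) ℂ) :
    polyLap p = dZ 0 1 (dZbar 0 1 p) + dZ 2 3 (dZbar 2 3 p) := by
  simp only [polyLap, dZ_dZbar, Fin.sum_univ_four]
  ring

lemma dZ_zero_one : dZ 0 1 polyZ₁ = 2 ∧ dZ 0 1 polyZ₁bar = 0 ∧ dZ 0 1 polyZ₂ = 0 ∧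
    dZ 0 1 polyZ₂bar = 0 := by
  refine ⟨?_, ?_, ?_, ?_⟩ <;>
  simp [dZ, polyZ₁, polyZ₁bar, polyZ₂, polyZ₂bar, smul_eq_C_mul, pderiv_X] <;>
  first | linear_combination C_I_mul_C_I | linear_combination -C_I_mul_C_I

lemma dZbar_zero_one : dZbar 0 1 polyZ₁ = 0 ∧ dZbar 0 1 polyZ₁bar = 2 ∧ dZbar 0 1 polyZ₂ = 0 ∧
    dZbar 0 1 polyZ₂bar = 0 := by
  refine ⟨?_, ?_, ?_, ?_⟩ <;>
  simp [dZbar, polyZ₁, polyZ₁bar, polyZ₂, polyZ₂bar, smul_eq_C_mul, pderiv_X] <;>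
  first | linear_combination C_I_mul_C_I | linear_combination -C_I_mul_C_I

lemma dZ_two_three : dZ 2 3 polyZ₁ = 0 ∧ dZ 2 3 polyZ₁bar = 0 ∧ dZ 2 3 polyZ₂ = 2 ∧
    dZ 2 3 polyZ₂bar = 0 := by
  refine ⟨?_, ?_, ?_, ?_⟩ <;>
  simp [dZ, polyZ₁, polyZ₁bar, polyZ₂, polyZ₂bar, smul_eq_C_mul, pderiv_X] <;>
  first | linear_combination C_I_mul_C_I | linear_combination -C_I_mul_C_I

lemma dZbar_two_three : dZbar 2 3 polyZ₁ = 0 ∧ dZbar 2 3 polyZ₁bar = 0 ∧ dZbar 2 3 polyZ₂ = 0 ∧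
    dZbar 2 3 polyZ₂bar = 2 := by
  refine ⟨?_, ?_, ?_, ?_⟩ <;>
  simp [dZbar, polyZ₁, polyZ₁bar, polyZ₂, polyZ₂bar, smul_eq_C_mul, pderiv_X] <;>
  first | linear_combination C_I_mul_C_I | linear_combination -C_I_mul_C_I

lemma derivation_two (D : Derivation ℂ (MvPolynomial (Fin 4) ℂ) (MvPolynomial (Fin 4) ℂ)) :
    D 2 = 0 := by
  simpa using D.map_natCast 2

lemma polyLap_zMonomial (a b c e : ℕ) :
    polyLap (zMonomial a b c e) =
      (4 * (a * b) : ℂ) • zMonomial (a - 1) (b - 1) c e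
        + (4 * (c * e) : ℂ) • zMonomial a b (c - 1) (e - 1) := by
  obtain ⟨h1, h2, h3, h4⟩ := dZ_zero_one
  obtain ⟨h5, h6, h7, h8⟩ := dZbar_zero_one
  obtain ⟨h9, h10, h11, h12⟩ := dZ_two_three
  obtain ⟨h13, h14, h15, h16⟩ := dZbar_two_three
  rw [polyLap_eq]
  simp only [zMonomial, Derivation.leibniz, Derivation.leibniz_pow, h1, h2, h3, h4, h5, h6, h7, h8,
    h9, h10, h11, h12, h13, h14, h15, h16, smul_eq_mul, nsmul_eq_mul, smul_zero, mul_zero,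
    add_zero, zero_add, smul_eq_C_mul, map_mul, map_ofNat, map_natCast, Derivation.map_natCast,
    derivation_two]
  ring

/-- For each parameter `t`, a harmonic polynomial of bidegree `(A, B)`. -/
def harmonicPoly (A B : ℕ) (t : ℂ) : MvPolynomial (Fin 4) ℂ :=
  (polyZ₁ + C t * polyZ₂bar) ^ A * (polyZ₂ - C t * polyZ₁bar) ^ B

lemma polyLap_harmonicPoly (A B : ℕ) (t : ℂ) : polyLap (harmonicPoly A B t) = 0 := by
  obtain ⟨h1, h2, h3, h4⟩ := dZ_zero_one
  obtain ⟨h5, h6, h7, h8⟩ := dZbar_zero_one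
  obtain ⟨h9, h10, h11, h12⟩ := dZ_two_three
  obtain ⟨h13, h14, h15, h16⟩ := dZbar_two_three
  have hC : ∀ (D : Derivation ℂ (MvPolynomial (Fin 4) ℂ) (MvPolynomial (Fin 4) ℂ)), D (C t) = 0 :=
    fun D => D.map_algebraMap t
  rw [polyLap_eq]
  simp only [harmonicPoly, Derivation.leibniz, Derivation.leibniz_pow, h1, h2, h3, h4, h5, h6, h7,
    h8, h9, h10, h11, h12, h13, h14, h15, h16, hC, smul_eq_mul, nsmul_eq_mul, smul_zero, mul_zero,
    add_zero, zero_add, map_sub, map_add, Derivation.map_natCast, sub_zero, zero_sub, mul_neg, map_neg,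
    derivation_two]
  ring

lemma isHomogeneous_X_add_C_mul_X (a : ℂ) (i j : Fin 4) :
    (X i + C a * X j : MvPolynomial (Fin 4) ℂ).IsHomogeneous 1 :=
  (isHomogeneous_X ℂ i).add ((isHomogeneous_X ℂ j).C_mul a)

lemma isHomogeneous_polyZ₁ : polyZ₁.IsHomogeneous 1 :=
  isHomogeneous_X_add_C_mul_X _ _ _

lemma isHomogeneous_polyZ₁bar : polyZ₁bar.IsHomogeneous 1 := by
  simpa [polyZ₁bar, sub_eq_add_neg] using isHomogeneous_X_add_C_mul_X (-Complex.I) 0 1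

lemma isHomogeneous_polyZ₂ : polyZ₂.IsHomogeneous 1 :=
  isHomogeneous_X_add_C_mul_X _ _ _

lemma isHomogeneous_polyZ₂bar : polyZ₂bar.IsHomogeneous 1 := by
  simpa [polyZ₂bar, sub_eq_add_neg] using isHomogeneous_X_add_C_mul_X (-Complex.I) 2 3

lemma isHomogeneous_zMonomial (a b c e : ℕ) :
    (zMonomial a b c e).IsHomogeneous (a + b + c + e) := by
  simpa [zMonomial] using (((isHomogeneous_polyZ₁.pow a).mul (isHomogeneous_polyZ₁bar.pow b)).mul
    (isHomogeneous_polyZ₂.pow c)).mul (isHomogeneous_polyZ₂bar.pow e)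

lemma isHomogeneous_harmonicPoly (A B : ℕ) (t : ℂ) :
    (harmonicPoly A B t).IsHomogeneous (A + B) := by
  simpa [harmonicPoly] using
    ((isHomogeneous_polyZ₁.add (isHomogeneous_polyZ₂bar.C_mul t)).pow A).mul
    ((isHomogeneous_polyZ₂.sub (isHomogeneous_polyZ₁bar.C_mul t)).pow B)

lemma polyEval_smul {p : MvPolynomial (Fin 4) ℂ} {d : ℕ} (hp : p.IsHomogeneous d) (r : ℝ)
    (x : E4) : polyEval (r • x) p = (r : ℂ) ^ d * polyEval x p := by
  simp only [polyEval, aeval_def, eval₂_eq', Finset.mul_sum]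
  refine Finset.sum_congr rfl fun n hn => ?_
  have hdeg : ∑ i, n i = d := by
    simpa [Finsupp.weight_apply, Finsupp.sum_fintype] using hp (mem_support_iff.mp hn)
  simp only [PiLp.smul_apply, smul_eq_mul, Complex.ofReal_mul, mul_pow, Finset.prod_mul_distrib,
    Finset.prod_pow_eq_pow_sum, hdeg]
  ring

lemma polyEval_polyZ (x : E4) :
    polyEval x polyZ₁ = x 0 + Complex.I * x 1 ∧ polyEval x polyZ₁bar = x 0 - Complex.I * x 1 ∧
    polyEval x polyZ₂ = x 2 + Complex.I * x 3 ∧ polyEval x polyZ₂bar = x 2 - Complex.I * x 3 := by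
  simp [polyZ₁, polyZ₁bar, polyZ₂, polyZ₂bar, polyEval_X]

lemma polyEval_polyZ_hopfAct (s : ℝ) (x : E4) :
    polyEval (hopfAct s x) polyZ₁ = Complex.exp (Complex.I * s) * polyEval x polyZ₁ ∧
    polyEval (hopfAct s x) polyZ₁bar = Complex.exp (-(Complex.I * s)) * polyEval x polyZ₁bar ∧
    polyEval (hopfAct s x) polyZ₂ = Complex.exp (-(Complex.I * s)) * polyEval x polyZ₂ ∧
    polyEval (hopfAct s x) polyZ₂bar = Complex.exp (Complex.I * s) * polyEval x polyZ₂bar := by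
  have h1 : Complex.exp (Complex.I * s) = Complex.cos s + Complex.sin s * Complex.I := by
    rw [mul_comm, Complex.exp_mul_I]
  have h2 : Complex.exp (-(Complex.I * s)) = Complex.cos s - Complex.sin s * Complex.I := by
    rw [← mul_neg, mul_comm, Complex.exp_mul_I]
    simp [sub_eq_add_neg]
  obtain ⟨e1, e2, e3, e4⟩ := polyEval_polyZ x
  obtain ⟨g1, g2, g3, g4⟩ := polyEval_polyZ (hopfAct s x)
  rw [e1, e2, e3, e4, g1, g2, g3, g4, h1, h2]
  simp only [hopfAct, WithLp.equiv_symm_apply]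
  refine ⟨?_, ?_, ?_, ?_⟩ <;> simp <;> ring_nf <;> simp <;> ring

/-- The Hopf circle action by linear isometries of `ℝ⁴`. -/
def hopfIsometry (s : ℝ) : E4 ≃ₗᵢ[ℝ] E4 :=
  LinearIsometry.toLinearIsometryEquiv
    { toFun := hopfAct s
      map_add' := fun x y => by
        ext i
        fin_cases i <;> simp [hopfAct] <;> ring
      map_smul' := fun r x => by
        ext i
        fin_cases i <;> simp [hopfAct] <;> ring
      norm_map' := fun x => by
        have h : ‖hopfAct s x‖ ^ 2 = ‖x‖ ^ 2 := by
          simp only [EuclideanSpace.real_norm_sq_eq, Fin.sum_univ_four, hopfAct]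
          simp
          linear_combination (x 0 ^ 2 + x 1 ^ 2 + x 2 ^ 2 + x 3 ^ 2) * Real.sin_sq_add_cos_sq s
        exact (sq_eq_sq₀ (norm_nonneg _) (norm_nonneg _)).mp h } rfl

lemma hopfIsometry_apply (s : ℝ) (x : E4) : hopfIsometry s x = hopfAct s x := rfl

lemma norm_hopfAct (s : ℝ) (x : E4) : ‖hopfAct s x‖ = ‖x‖ := by
  rw [← hopfIsometry_apply, LinearIsometryEquiv.norm_map]

lemma polyEval_zMonomial_hopfAct (a b c e : ℕ) (s : ℝ) (x : E4) :
    polyEval (hopfAct s x) (zMonomial a b c e)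
      = Complex.exp (Complex.I * (a + e - b - c) * s) * polyEval x (zMonomial a b c e) := by
  obtain ⟨h1, h2, h3, h4⟩ := polyEval_polyZ_hopfAct s x
  simp only [zMonomial, map_mul, map_pow, h1, h2, h3, h4, mul_pow, ← Complex.exp_nat_mul]
  have h : Complex.exp (Complex.I * (a + e - b - c) * s)
      = Complex.exp (a * (Complex.I * s)) * Complex.exp (b * -(Complex.I * s))
        * Complex.exp (c * -(Complex.I * s)) * Complex.exp (e * (Complex.I * s)) := by
    rw [← Complex.exp_add, ← Complex.exp_add, ← Complex.exp_add]
    ring_nf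
  rw [h]
  ring

lemma polyEval_harmonicPoly_hopfAct (A B : ℕ) (t : ℂ) (s : ℝ) (x : E4) :
    polyEval (hopfAct s x) (harmonicPoly A B t)
      = Complex.exp (Complex.I * (A - B) * s) * polyEval x (harmonicPoly A B t) := by
  obtain ⟨h1, h2, h3, h4⟩ := polyEval_polyZ_hopfAct s x
  have h : Complex.exp (Complex.I * (A - B) * s)
      = Complex.exp (Complex.I * s) ^ A * Complex.exp (-(Complex.I * s)) ^ B := by
    rw [← Complex.exp_nat_mul, ← Complex.exp_nat_mul, ← Complex.exp_add]
    ring_nf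
  simp only [harmonicPoly, map_mul, map_pow, map_add, map_sub, h1, h2, h3, h4, polyEval_C, h]
  rw [mul_left_comm (t : ℂ), ← mul_add, mul_left_comm (t : ℂ), ← mul_sub, mul_pow, mul_pow]
  ring

/-- The `0`-homogeneous function on `ℝ⁴ \ {0}` with the same values on `S³` as
`harmonicPoly A B t`. -/
def harmonicSection (A B : ℕ) (t : ℂ) (x : E4) : ℂ :=
  polyEval x (harmonicPoly A B t) * invNormPow (A + B) x

lemma isEigenSection_harmonicSection (A B : ℕ) (t : ℂ) {m : ℤ} (hm : (m : ℤ) = A - B) {μ : ℝ}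
    (hμ : μ = (((A + B : ℕ) : ℝ) * (((A + B : ℕ) : ℝ) + 2) - (m : ℝ) ^ 2) / 4) :
    IsEigenSection m μ (harmonicSection A B t) := by
  refine ⟨fun x hx => (contDiffAt_polyEval_mul_invNormPow _ _ hx).contDiffWithinAt, ?_, ?_, ?_⟩
  · intro r hr x
    have hr' : (r : ℂ) ≠ 0 := by exact_mod_cast hr.ne'
    simp only [harmonicSection, invNormPow, polyEval_smul (isHomogeneous_harmonicPoly A B t),
      norm_smul, Real.norm_of_nonneg hr.le, Complex.ofReal_mul, mul_pow, mul_inv]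
    field_simp
  · intro s x
    simp only [harmonicSection, invNormPow, polyEval_harmonicPoly_hopfAct, norm_hopfAct, hm]
    push_cast
    ring
  · intro x hx
    have hx0 : x ≠ 0 := by rintro rfl; simp at hx
    have h := lap4_polyEval_mul_invNormPow (isHomogeneous_harmonicPoly A B t) hx0
    rw [polyLap_harmonicPoly] at h
    have h' : lap4 (harmonicSection A B t) x = _ := h
    rw [h', hμ, hm]
    simp only [harmonicSection, invNormPow, hx]
    push_cast
    simp
    ring

lemma linearIndependent_harmonicSection (A B : ℕ) :
    LinearIndependent ℂ (fun (i : Fin (A + B + 1)) (x : Metric.sphere (0 : E4) 1) =>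
      harmonicSection A B (i : ℕ) (x : E4)) := by
  rw [Fintype.linearIndependent_iff]
  intro g hg
  have hsphere : ∀ x : E4, ‖x‖ = 1 →
      ∑ i : Fin (A + B + 1), g i * polyEval x (harmonicPoly A B (i : ℕ)) = 0 := by
    intro x hx
    have := congrFun hg ⟨x, by simpa using hx⟩
    simpa [harmonicSection, invNormPow, hx] using this
  have hall : ∀ x : E4, x ≠ 0 →
      ∑ i : Fin (A + B + 1), g i * polyEval x (harmonicPoly A B (i : ℕ)) = 0 := by
    intro x hx
    have hn : ‖x‖ ≠ 0 := norm_ne_zero_iff.mpr hx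
    have h1 := hsphere (‖x‖⁻¹ • x) (by rw [norm_smul, norm_inv, norm_norm, inv_mul_cancel₀ hn])
    simp only [polyEval_smul (isHomogeneous_harmonicPoly A B _), mul_left_comm (g _)] at h1
    rw [← Finset.mul_sum] at h1
    refine (mul_eq_zero.mp h1).resolve_left (pow_ne_zero _ ?_)
    exact_mod_cast inv_ne_zero hn
  have hP : ∑ i : Fin (A + B + 1), C (g i) * harmonicPoly A B (i : ℕ) = 0 := by
    refine funext_set (fun _ : Fin 4 => Complex.ofReal '' Set.Ioi (0 : ℝ))
      (fun _ => (Set.Ioi_infinite 0).image Complex.ofReal_injective.injOn) fun y hy => ?_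
    choose! x hx hxy using hy
    have hx0 : (WithLp.toLp 2 x : E4) ≠ 0 := by
      intro h
      have h0 := congrArg (fun v : E4 => v 0) h
      exact (hx 0 (Set.mem_univ _)).ne' (by simpa using h0)
    have hy' : y = fun i => ((x i : ℝ) : ℂ) := funext fun i => (hxy i (Set.mem_univ _)).symm
    have h2 := hall _ hx0
    simpa [polyEval, hy', MvPolynomial.aeval_eq_eval] using h2
  have hQ := congrArg (MvPolynomial.aeval (R := ℂ) (![Polynomial.C (1 / 2) * (Polynomial.X - 1),
      Polynomial.C (-Complex.I / 2) * (Polynomial.X + 1),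
      Polynomial.C (1 / 2) * (Polynomial.X + 1),
      Polynomial.C (-Complex.I / 2) * (Polynomial.X - 1)] : Fin 4 → Polynomial ℂ)) hP
  have hI : (Polynomial.C Complex.I * Polynomial.C (-Complex.I / 2) : Polynomial ℂ)
      = Polynomial.C (1 / 2) := by
    rw [← Polynomial.C_mul]
    congr 1
    linear_combination (-1 / 2 : ℂ) * Complex.I_mul_I
  have h2 : (Polynomial.C (1 / 2) * 2 : Polynomial ℂ) = 1 := by
    rw [show (2 : Polynomial ℂ) = Polynomial.C 2 from rfl, ← Polynomial.C_mul]
    norm_num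
  have hterm : ∀ t : ℂ, MvPolynomial.aeval (R := ℂ)
      (![Polynomial.C (1 / 2) * (Polynomial.X - 1),
      Polynomial.C (-Complex.I / 2) * (Polynomial.X + 1),
      Polynomial.C (1 / 2) * (Polynomial.X + 1),
      Polynomial.C (-Complex.I / 2) * (Polynomial.X - 1)] : Fin 4 → Polynomial ℂ)
      (harmonicPoly A B t) = (Polynomial.X + Polynomial.C t) ^ (A + B) := by
    intro t
    simp only [harmonicPoly, polyZ₁, polyZ₁bar, polyZ₂, polyZ₂bar, map_mul, map_pow, map_add,
      map_sub, aeval_X, aeval_C, Polynomial.algebraMap_eq]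
    rw [pow_add]
    congr 2
    · simp only [Matrix.cons_val]
      linear_combination ((Polynomial.X + 1) - Polynomial.C t * (Polynomial.X - 1)) * hI
        + (Polynomial.X + Polynomial.C t) * h2
    · simp only [Matrix.cons_val]
      linear_combination ((Polynomial.X - 1) + Polynomial.C t * (Polynomial.X + 1)) * hI
        + (Polynomial.X + Polynomial.C t) * h2
  simp only [map_sum, map_mul, hterm, aeval_C, map_zero, Polynomial.algebraMap_eq] at hQ
  have hinj : Function.Injective fun i : Fin (A + B + 1) => ((i : ℕ) : ℂ) := fun i j h =>
    Fin.ext (Nat.cast_injective (R := ℂ) h)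
  have hg0 : g = 0 := by
    refine Matrix.eq_zero_of_forall_pow_sum_mul_pow_eq_zero hinj fun k => ?_
    have hk : (k : ℕ) ≤ A + B := Nat.lt_succ_iff.mp k.2
    have h3 := congrArg (fun p : Polynomial ℂ => p.coeff (A + B - k)) hQ
    simp only [Polynomial.finsetSum_coeff, Polynomial.coeff_C_mul, Polynomial.coeff_X_add_C_pow,
      Polynomial.coeff_zero, Nat.sub_sub_self hk, ← mul_assoc, ← Finset.sum_mul] at h3
    refine (mul_eq_zero.mp h3).resolve_right ?_
    exact_mod_cast (Nat.choose_pos (Nat.sub_le _ _)).ne'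
  exact fun i => congrFun hg0 i

/-- A smooth function of `‖x‖²` that equals `1` on `S³` and is supported in an annulus. -/
def radialCutoff (x : E4) : ℂ :=
  (((⟨1 / 4, 1 / 2, by norm_num, by norm_num⟩ : ContDiffBump (1 : ℝ)) (‖x‖ ^ 2) : ℝ) : ℂ)

lemma contDiff_radialCutoff {n : ℕ∞} : ContDiff ℝ n radialCutoff :=
  Complex.ofRealCLM.contDiff.comp ((ContDiffBump.contDiff _).comp (contDiff_norm_sq ℝ))

lemma radialCutoff_eq_of_norm_eq {x y : E4} (h : ‖x‖ = ‖y‖) : radialCutoff x = radialCutoff y := by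
  simp only [radialCutoff, h]

lemma radialCutoff_of_norm_eq_one {x : E4} (h : ‖x‖ = 1) : radialCutoff x = 1 := by
  rw [radialCutoff, h, ContDiffBump.one_of_mem_closedBall _ (by simp)]
  simp

lemma radialCutoff_nonneg (x : E4) : ∃ r : ℝ, 0 ≤ r ∧ radialCutoff x = r :=
  ⟨_, ContDiffBump.nonneg _, rfl⟩

lemma radialCutoff_eventually_zero : ∀ᶠ x in nhds (0 : E4), radialCutoff x = 0 := by
  have hc : Filter.Tendsto (fun x : E4 => ‖x‖ ^ 2) (nhds 0) (nhds 0) := by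
    have : Continuous fun x : E4 => ‖x‖ ^ 2 := by fun_prop
    simpa using this.tendsto 0
  filter_upwards [hc.eventually (gt_mem_nhds (show (0 : ℝ) < 1 / 2 by norm_num))] with x hx
  rw [radialCutoff, ContDiffBump.zero_of_le_dist _ ?_, Complex.ofReal_zero]
  rw [Real.dist_eq, abs_sub_comm, le_abs]
  left
  linarith

lemma hasCompactSupport_radialCutoff : HasCompactSupport radialCutoff := by
  refine HasCompactSupport.intro (isCompact_closedBall (0 : E4) 2) fun x hx => ?_
  have hx2 : 2 < ‖x‖ := by simpa using hx
  rw [radialCutoff, ContDiffBump.zero_of_le_dist _ ?_, Complex.ofReal_zero]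
  rw [Real.dist_eq, le_abs]
  left
  nlinarith

lemma fderiv_radialCutoff_single (x : E4) :
    ∃ r : ℂ, ∀ i, fderiv ℝ radialCutoff x (EuclideanSpace.single i 1) = r * ((x i : ℝ) : ℂ) := by
  let φ : ContDiffBump (1 : ℝ) := ⟨1 / 4, 1 / 2, by norm_num, by norm_num⟩
  have h1 : HasDerivAt φ (deriv φ (‖x‖ ^ 2)) (‖x‖ ^ 2) :=
    ((φ.contDiff (n := 1)).differentiable (by simp) _).hasDerivAt
  have h2 := h1.comp_hasFDerivAt x (hasStrictFDerivAt_norm_sq x).hasFDerivAt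
  have h3 := (Complex.ofRealCLM.hasFDerivAt (x := φ (‖x‖ ^ 2))).comp x h2
  have h4 : fderiv ℝ radialCutoff x = _ := h3.fderiv
  refine ⟨2 * (deriv φ (‖x‖ ^ 2) : ℝ), fun i => ?_⟩
  rw [h4]
  simp [EuclideanSpace.inner_single_right]
  ring

lemma hasCompactSupport_radialCutoff_mul (F : E4 → ℂ) :
    HasCompactSupport fun x => radialCutoff x * F x :=
  hasCompactSupport_radialCutoff.mul_right

lemma radialCutoff_mul_eventually_zero (F : E4 → ℂ) :
    (fun x => radialCutoff x * F x) =ᶠ[nhds 0] fun _ => 0 := by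
  filter_upwards [radialCutoff_eventually_zero] with x hx
  simp [hx]

lemma continuous_radialCutoff_mul {F : E4 → ℂ} (hF : ∀ x, x ≠ 0 → ContinuousAt F x) :
    Continuous fun x => radialCutoff x * F x := by
  rw [continuous_iff_continuousAt]
  intro x
  rcases eq_or_ne x 0 with rfl | hx
  · exact continuousAt_const.congr (radialCutoff_mul_eventually_zero F).symm
  · exact (contDiff_radialCutoff (n := 0)).continuous.continuousAt.mul (hF x hx)

lemma integrable_radialCutoff_mul {F : E4 → ℂ} (hF : ∀ x, x ≠ 0 → ContinuousAt F x) :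
    MeasureTheory.Integrable fun x => radialCutoff x * F x :=
  (continuous_radialCutoff_mul hF).integrable_of_hasCompactSupport
    (hasCompactSupport_radialCutoff_mul F)

lemma contDiff_radialCutoff_mul {F : E4 → ℂ} (hF : ∀ x, x ≠ 0 → ContDiffAt ℝ 1 F x) :
    ContDiff ℝ 1 fun x => radialCutoff x * F x := by
  rw [contDiff_iff_contDiffAt]
  intro x
  rcases eq_or_ne x 0 with rfl | hx
  · exact contDiffAt_const.congr_of_eventuallyEq (radialCutoff_mul_eventually_zero F)
  · exact (contDiff_radialCutoff (n := 1)).contDiffAt.mul (hF x hx)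

lemma integral_fderiv_eq_zero {h : E4 → ℂ} (hh : ContDiff ℝ 1 h) (hc : HasCompactSupport h)
    (v : E4) : MeasureTheory.Integrable (fun x => fderiv ℝ h x v) ∧ ∫ x, fderiv ℝ h x v = 0 := by
  have hint : MeasureTheory.Integrable (fun x => fderiv ℝ h x v) :=
    ((hh.continuous_fderiv (by simp)).clm_apply continuous_const).integrable_of_hasCompactSupport
      (hc.fderiv_apply (𝕜 := ℝ) v)
  refine ⟨hint, ?_⟩
  have := integral_mul_fderiv_eq_neg_fderiv_mul_of_integrable (𝕜 := ℂ) (f := fun _ : E4 => (1 : ℂ))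
    (g := h) (v := v) (μ := MeasureTheory.volume) (by simp) (by simpa using hint)
    (by simpa using hh.continuous.integrable_of_hasCompactSupport hc)
    (fun x _ => differentiableAt_const _) (fun x _ => hh.differentiable (by simp) x)
  simpa using this

lemma sum_coord_mul_fderiv_eq_zero {f : E4 → ℂ} (hf : ∀ c : ℝ, 0 < c → ∀ x : E4, f (c • x) = f x)
    {x : E4} (hd : DifferentiableAt ℝ f x) :
    ∑ i, ((x i : ℝ) : ℂ) * fderiv ℝ f x (EuclideanSpace.single i 1) = 0 := by
  have h1 : HasDerivAt (fun c : ℝ => c • x) x 1 := by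
    simpa using (hasDerivAt_id (1 : ℝ)).smul_const x
  have hd' : HasFDerivAt f (fderiv ℝ f x) ((1 : ℝ) • x) := by simpa using hd.hasFDerivAt
  have h2 := hd'.comp_hasDerivAt (1 : ℝ) h1
  have h3 : (f ∘ fun c : ℝ => c • x) =ᶠ[nhds 1] fun _ => f x := by
    filter_upwards [lt_mem_nhds (show (0 : ℝ) < 1 by norm_num)] with c hc
    exact hf c hc x
  have h4 : fderiv ℝ f x x = 0 :=
    h2.unique ((hasDerivAt_const (1 : ℝ) (f x)).congr_of_eventuallyEq h3)
  have hx : x = ∑ i, x i • EuclideanSpace.single i (1 : ℝ) := by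
    ext j
    simp [Finset.sum_apply, Pi.single_apply]
  calc ∑ i, ((x i : ℝ) : ℂ) * fderiv ℝ f x (EuclideanSpace.single i 1)
      = fderiv ℝ f x (∑ i, x i • EuclideanSpace.single i (1 : ℝ)) := by simp
    _ = 0 := by rw [← hx, h4]

lemma lap4_smul {f : E4 → ℂ} (hf : ∀ c : ℝ, 0 < c → ∀ x : E4, f (c • x) = f x)
    {c : ℝ} (hc : 0 < c) (x : E4) : lap4 f x = (c : ℂ) ^ 2 * lap4 f (c • x) := by
  have h1 : ∀ (v y : E4), fderiv ℝ f y v = (c : ℂ) * fderiv ℝ f (c • y) v := by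
    intro v y
    have h := fderiv_comp_smul (𝕜 := ℝ) (f := f) (x := y) c
    rw [show (fun z => f (c • z)) = f from funext (hf c hc)] at h
    rw [h]
    simp
  simp only [lap4, Finset.mul_sum]
  refine Finset.sum_congr rfl fun i _ => ?_
  set v : E4 := EuclideanSpace.single i 1
  have h2 := fderiv_comp_smul (𝕜 := ℝ) (f := fun y => fderiv ℝ f y v) (x := x) c
  have h3 : (fun z => fderiv ℝ f (c • z) v) = (c : ℂ)⁻¹ • fun z => fderiv ℝ f z v := by
    funext z
    rw [Pi.smul_apply]
    have : (c : ℂ) ≠ 0 := by exact_mod_cast hc.ne'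
    rw [h1 v z, smul_eq_mul]
    field_simp
  rw [h3] at h2
  have h4 := congrArg (fun L : E4 →L[ℝ] ℂ => L v) h2
  rw [fderiv_const_smul_field] at h4
  have : (c : ℂ) ≠ 0 := by exact_mod_cast hc.ne'
  simp at h4
  field_simp at h4
  linear_combination h4

/-- Green's identity for `0`-homogeneous functions. -/
lemma integral_radialCutoff_green {f g : E4 → ℂ}
    (hf : ∀ x, x ≠ 0 → ContDiffAt ℝ (⊤ : ℕ∞) f x) (hg : ∀ x, x ≠ 0 → ContDiffAt ℝ (⊤ : ℕ∞) g x)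
    (hf0 : ∀ c : ℝ, 0 < c → ∀ x : E4, f (c • x) = f x)
    (hg0 : ∀ c : ℝ, 0 < c → ∀ x : E4, g (c • x) = g x) :
    ∫ x, radialCutoff x * (g x * lap4 f x - f x * lap4 g x) = 0 := by
  have hD : ∀ {u : E4 → ℂ}, (∀ x, x ≠ 0 → ContDiffAt ℝ (⊤ : ℕ∞) u x) → ∀ (v x : E4), x ≠ 0 →
      ContDiffAt ℝ 1 (fun y => fderiv ℝ u y v) x := fun hu v x hx =>
    ((hu x hx).fderiv_right (m := 1) (by norm_cast)).clm_apply contDiffAt_const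
  have hd : ∀ {u : E4 → ℂ}, (∀ x, x ≠ 0 → ContDiffAt ℝ (⊤ : ℕ∞) u x) → ∀ x, x ≠ 0 →
      DifferentiableAt ℝ u x := fun hu x hx => (hu x hx).differentiableAt (by simp)
  let F : Fin 4 → E4 → ℂ := fun i x =>
    g x * fderiv ℝ f x (EuclideanSpace.single i 1) - f x * fderiv ℝ g x (EuclideanSpace.single i 1)
  have hF : ∀ i x, x ≠ 0 → ContDiffAt ℝ 1 (F i) x := fun i x hx =>
    (((hg x hx).of_le (by norm_cast)).mul (hD hf _ x hx)).sub
      (((hf x hx).of_le (by norm_cast)).mul (hD hg _ x hx))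
  have hz := fun i => integral_fderiv_eq_zero (contDiff_radialCutoff_mul (hF i))
    (hasCompactSupport_radialCutoff_mul (F i)) (EuclideanSpace.single i 1)
  have hsum : ∫ x, ∑ i, fderiv ℝ (fun y => radialCutoff y * F i y) x
      (EuclideanSpace.single i 1) = 0 := by
    rw [MeasureTheory.integral_finsetSum _ fun i _ => (hz i).1]
    exact Finset.sum_eq_zero fun i _ => (hz i).2
  rw [← hsum]
  congr 1
  funext x
  rcases eq_or_ne x 0 with rfl | hx
  · have : ∀ i, fderiv ℝ (fun y => radialCutoff y * F i y) 0 = 0 := fun i => by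
      rw [(radialCutoff_mul_eventually_zero (F i)).fderiv_eq]
      simp
    simp [this, radialCutoff_eventually_zero.self_of_nhds]
  · obtain ⟨r, hr⟩ := fderiv_radialCutoff_single x
    have h1 : ∀ i, fderiv ℝ (fun y => radialCutoff y * F i y) x (EuclideanSpace.single i 1)
        = radialCutoff x * (g x * fderiv ℝ (fun y => fderiv ℝ f y (EuclideanSpace.single i 1)) x
            (EuclideanSpace.single i 1)
          - f x * fderiv ℝ (fun y => fderiv ℝ g y (EuclideanSpace.single i 1)) x
            (EuclideanSpace.single i 1))
        + r * g x * (((x i : ℝ) : ℂ) * fderiv ℝ f x (EuclideanSpace.single i 1))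
        - r * f x * (((x i : ℝ) : ℂ) * fderiv ℝ g x (EuclideanSpace.single i 1)) := by
      intro i
      have hDf := (hD hf (EuclideanSpace.single i 1) x hx).differentiableAt (by simp)
      have hDg := (hD hg (EuclideanSpace.single i 1) x hx).differentiableAt (by simp)
      have hFi : fderiv ℝ (F i) x = _ :=
        fderiv_fun_sub ((hd hg x hx).fun_mul hDf) ((hd hf x hx).fun_mul hDg)
      rw [fderiv_fun_mul ((contDiff_radialCutoff (n := 1)).differentiable (by simp) x)
        ((hF i x hx).differentiableAt (by simp)), hFi,
        fderiv_fun_mul (hd hg x hx) hDf, fderiv_fun_mul (hd hf x hx) hDg]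
      simp only [_root_.add_apply, _root_.smul_apply, _root_.sub_apply, smul_eq_mul, hr, F]
      ring
    simp only [h1, Finset.sum_add_distrib, Finset.sum_sub_distrib, ← Finset.mul_sum,
      sum_coord_mul_fderiv_eq_zero hf0 (hd hf x hx), sum_coord_mul_fderiv_eq_zero hg0 (hd hg x hx),
      lap4]
    ring

lemma radialCutoff_zero : radialCutoff 0 = 0 :=
  radialCutoff_eventually_zero.self_of_nhds

/-- The moment of `f` against the monomial `z₁ᵃ z̄₁ᵇ z₂ᶜ z̄₂ᵉ`. -/
def moment (f : E4 → ℂ) (a b c e : ℕ) : ℂ :=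
  ∫ x, radialCutoff x *
    (f x * (polyEval x (zMonomial a b c e) * invNormPow (a + b + c + e + 2) x))

lemma integrable_moment {f : E4 → ℂ} (hf : ∀ x, x ≠ 0 → ContinuousAt f x) (a b c e : ℕ) :
    MeasureTheory.Integrable fun x => radialCutoff x *
      (f x * (polyEval x (zMonomial a b c e) * invNormPow (a + b + c + e + 2) x)) :=
  integrable_radialCutoff_mul fun x hx =>
    (hf x hx).mul (contDiffAt_polyEval_mul_invNormPow _ _ hx (n := 0)).continuousAt

lemma moment_fun_add {f g : E4 → ℂ} (hf : ∀ x, x ≠ 0 → ContinuousAt f x)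
    (hg : ∀ x, x ≠ 0 → ContinuousAt g x) (a b c e : ℕ) :
    moment (f + g) a b c e = moment f a b c e + moment g a b c e := by
  simp only [moment]
  rw [← MeasureTheory.integral_add (integrable_moment hf a b c e) (integrable_moment hg a b c e)]
  congr 1
  funext x
  rw [Pi.add_apply]
  ring

lemma moment_fun_smul (r : ℂ) (f : E4 → ℂ) (a b c e : ℕ) :
    moment (r • f) a b c e = r * moment f a b c e := by
  simp only [moment]
  rw [← MeasureTheory.integral_const_mul]
  congr 1
  funext x
  rw [Pi.smul_apply, smul_eq_mul]
  ring

lemma polyEval_zMonomial_add (a b c e : ℕ) (x : E4) :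
    polyEval x (zMonomial (a + 1) (b + 1) c e) + polyEval x (zMonomial a b (c + 1) (e + 1))
      = ((‖x‖ : ℝ) : ℂ) ^ 2 * polyEval x (zMonomial a b c e) := by
  obtain ⟨h1, h2, h3, h4⟩ := polyEval_polyZ x
  have h : polyEval x polyZ₁ * polyEval x polyZ₁bar + polyEval x polyZ₂ * polyEval x polyZ₂bar
      = ((‖x‖ : ℝ) : ℂ) ^ 2 := by
    rw [normSq_eq_sum, Fin.sum_univ_four, h1, h2, h3, h4]
    linear_combination (-(x 1 : ℂ) ^ 2 - (x 3 : ℂ) ^ 2) * Complex.I_mul_I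
  simp only [zMonomial, map_mul, map_pow, pow_succ _ a, pow_succ _ b, pow_succ _ c, pow_succ _ e,
    ← h]
  ring

lemma moment_add {f : E4 → ℂ} (hf : ∀ x, x ≠ 0 → ContinuousAt f x) (a b c e : ℕ) :
    moment f (a + 1) (b + 1) c e + moment f a b (c + 1) (e + 1) = moment f a b c e := by
  simp only [moment]
  rw [← MeasureTheory.integral_add (integrable_moment hf _ _ _ _) (integrable_moment hf _ _ _ _)]
  congr 1
  funext x
  rcases eq_or_ne x 0 with rfl | hx
  · simp [radialCutoff_zero]
  have h1 : a + 1 + (b + 1) + c + e + 2 = a + b + c + e + 2 + 2 := by ring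
  have h2 : a + b + (c + 1) + (e + 1) + 2 = a + b + c + e + 2 + 2 := by ring
  rw [h1, h2, ← invNormPow_add (a + b + c + e + 2) 2 hx]
  linear_combination radialCutoff x * f x * invNormPow (a + b + c + e + 2 + 2) x *
    polyEval_zMonomial_add a b c e x

lemma IsEigenSection.contDiffAt {m : ℤ} {μ : ℝ} {f : E4 → ℂ} (hf : IsEigenSection m μ f) {x : E4}
    (hx : x ≠ 0) : ContDiffAt ℝ (⊤ : ℕ∞) f x :=
  hf.1.contDiffAt (isOpen_ne.mem_nhds hx)

lemma IsEigenSection.continuousAt {m : ℤ} {μ : ℝ} {f : E4 → ℂ} (hf : IsEigenSection m μ f) :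
    ∀ x, x ≠ 0 → ContinuousAt f x :=
  fun _ hx => (hf.contDiffAt hx).continuousAt

lemma IsEigenSection.lap4_eq {m : ℤ} {μ : ℝ} {f : E4 → ℂ} (hf : IsEigenSection m μ f) {x : E4}
    (hx : x ≠ 0) : lap4 f x = -((4 * μ + m ^ 2 : ℝ) : ℂ) * (invNormPow 2 x * f x) := by
  have hn : 0 < ‖x‖⁻¹ := inv_pos.mpr (norm_pos_iff.mpr hx)
  have h1 := hf.2.2.2 (‖x‖⁻¹ • x) (norm_smul_inv_norm (𝕜 := ℝ) hx)
  rw [hf.2.1 _ hn] at h1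
  rw [lap4_smul hf.2.1 hn x]
  simp only [invNormPow]
  push_cast
  rw [← inv_pow]
  linear_combination -4 * ((‖x‖ : ℂ)⁻¹) ^ 2 * h1

lemma IsEigenSection.moment_recurrence {m : ℤ} {μ : ℝ} {f : E4 → ℂ} (hf : IsEigenSection m μ f)
    (a b c e : ℕ) :
    (((a + b + c + e : ℕ) : ℂ) * ((a + b + c + e : ℕ) + 2) - ((4 * μ + m ^ 2 : ℝ) : ℂ)) *
      moment f a b c e
      = 4 * (a * b) * moment f (a - 1) (b - 1) c e
        + 4 * (c * e) * moment f a b (c - 1) (e - 1) := by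
  set d := a + b + c + e with hd
  have hG := integral_radialCutoff_green (fun x hx => hf.contDiffAt hx)
    (fun x hx => contDiffAt_polyEval_mul_invNormPow (zMonomial a b c e) d hx) hf.2.1 (by
      intro r hr x
      have hr' : (r : ℂ) ≠ 0 := by exact_mod_cast hr.ne'
      simp only [invNormPow, polyEval_smul (isHomogeneous_zMonomial a b c e), norm_smul,
        Real.norm_eq_abs, abs_of_pos hr, Complex.ofReal_mul, mul_pow, mul_inv, ← hd]
      field_simp)
  have h1 : ∀ x, (4 * (a * b) : ℂ) * (polyEval x (zMonomial (a - 1) (b - 1) c e) * invNormPow d x)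
      = (4 * (a * b) : ℂ) * (polyEval x (zMonomial (a - 1) (b - 1) c e) *
        invNormPow (a - 1 + (b - 1) + c + e + 2) x) := by
    intro x
    rcases Nat.eq_zero_or_pos a with rfl | ha
    · simp
    rcases Nat.eq_zero_or_pos b with rfl | hb
    · simp
    rw [show d = a - 1 + (b - 1) + c + e + 2 by omega]
  have h2 : ∀ x, (4 * (c * e) : ℂ) * (polyEval x (zMonomial a b (c - 1) (e - 1)) * invNormPow d x)
      = (4 * (c * e) : ℂ) * (polyEval x (zMonomial a b (c - 1) (e - 1)) *
        invNormPow (a + b + (c - 1) + (e - 1) + 2) x) := by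
    intro x
    rcases Nat.eq_zero_or_pos c with rfl | ha
    · simp
    rcases Nat.eq_zero_or_pos e with rfl | hb
    · simp
    rw [show d = a + b + (c - 1) + (e - 1) + 2 by omega]
  rw [← sub_eq_zero, ← sub_sub]
  simp only [moment]
  rw [← MeasureTheory.integral_const_mul, ← MeasureTheory.integral_const_mul,
    ← MeasureTheory.integral_const_mul,
    ← MeasureTheory.integral_sub ((integrable_moment hf.continuousAt _ _ _ _).const_mul _)
      ((integrable_moment hf.continuousAt _ _ _ _).const_mul _),
    ← MeasureTheory.integral_sub (((integrable_moment hf.continuousAt _ _ _ _).const_mul _).sub'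
      ((integrable_moment hf.continuousAt _ _ _ _).const_mul _))
      ((integrable_moment hf.continuousAt _ _ _ _).const_mul _), ← hG]
  congr 1
  funext x
  rcases eq_or_ne x 0 with rfl | hx
  · simp [radialCutoff_zero]
  have hl := lap4_polyEval_mul_invNormPow (isHomogeneous_zMonomial a b c e) hx
  rw [← hd] at hl
  rw [hl, hf.lap4_eq hx, polyLap_zMonomial]
  have h3 : invNormPow d x * invNormPow 2 x = invNormPow (d + 2) x := by
    simp [invNormPow, pow_add, mul_comm]
  simp only [map_add, map_smul, smul_eq_mul, ← hd]
  linear_combination radialCutoff x * f x * h1 x + radialCutoff x * f x * h2 x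
    + radialCutoff x * f x * polyEval x (zMonomial a b c e) * ((4 * μ + m ^ 2 : ℝ) : ℂ) * h3

lemma IsEigenSection.moment_eq_zero_of_weight {m : ℤ} {μ : ℝ} {f : E4 → ℂ}
    (hf : IsEigenSection m μ f) {a b c e : ℕ} (hw : (a : ℤ) + e - b - c + m ≠ 0) :
    moment f a b c e = 0 := by
  set w : ℤ := (a : ℤ) + e - b - c + m with hw_def
  have key : ∀ s : ℝ, moment f a b c e = Complex.exp (Complex.I * w * s) * moment f a b c e := by
    intro s
    conv_lhs => rw [moment, ← (hopfIsometry s).measurePreserving.integral_comp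
      (hopfIsometry s).toHomeomorph.measurableEmbedding]
    rw [moment, ← MeasureTheory.integral_const_mul]
    congr 1
    funext x
    rw [hopfIsometry_apply, radialCutoff_eq_of_norm_eq (norm_hopfAct s x), hf.2.2.1,
      polyEval_zMonomial_hopfAct, invNormPow, norm_hopfAct, ← invNormPow]
    have : Complex.exp (Complex.I * w * s)
        = Complex.exp (Complex.I * m * s) * Complex.exp (Complex.I * (a + e - b - c) * s) := by
      rw [← Complex.exp_add, hw_def]
      push_cast
      ring_nf
    rw [this]
    ring
  have hw' : (w : ℂ) ≠ 0 := by exact_mod_cast hw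
  have h := key (Real.pi / w)
  rw [show Complex.I * (w : ℂ) * ((Real.pi / w : ℝ) : ℂ) = Real.pi * Complex.I by
    push_cast
    field_simp, Complex.exp_pi_mul_I] at h
  linear_combination h / 2

lemma IsEigenSection.moment_eq_zero_of_critical {m : ℤ} {μ : ℝ} {f : E4 → ℂ}
    (hf : IsEigenSection m μ f)
    (h : ∀ a b c e : ℕ, ((a + b + c + e : ℕ) : ℝ) * ((a + b + c + e : ℕ) + 2) = 4 * μ + m ^ 2 →
      (∀ a' b' c' e' : ℕ, a' + b' + c' + e' < a + b + c + e → moment f a' b' c' e' = 0) →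
      moment f a b c e = 0) (a b c e : ℕ) : moment f a b c e = 0 := by
  induction hd : a + b + c + e using Nat.strong_induction_on generalizing a b c e with
  | _ d ih =>
    subst hd
    have ih' : ∀ a' b' c' e' : ℕ, a' + b' + c' + e' < a + b + c + e → moment f a' b' c' e' = 0 :=
      fun a' b' c' e' hlt => ih _ hlt a' b' c' e' rfl
    by_cases hcrit : ((a + b + c + e : ℕ) : ℝ) * ((a + b + c + e : ℕ) + 2) = 4 * μ + m ^ 2
    · exact h a b c e hcrit ih'
    have h1 : (a * b : ℂ) * moment f (a - 1) (b - 1) c e = 0 := by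
      rcases Nat.eq_zero_or_pos a with rfl | ha
      · simp
      rw [ih' _ _ _ _ (by omega), mul_zero]
    have h2 : (c * e : ℂ) * moment f a b (c - 1) (e - 1) = 0 := by
      rcases Nat.eq_zero_or_pos c with rfl | hc
      · simp
      rw [ih' _ _ _ _ (by omega), mul_zero]
    have hrec := hf.moment_recurrence a b c e
    rw [mul_assoc 4, mul_assoc 4, h1, h2, mul_zero, add_zero] at hrec
    refine (mul_eq_zero.mp hrec).resolve_left fun h0 => hcrit ?_
    exact_mod_cast sub_eq_zero.mp h0

lemma IsEigenSection.moment_eq_zero_of_forall_ne {m : ℤ} {μ : ℝ} {f : E4 → ℂ}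
    (hf : IsEigenSection m μ f)
    (hμ : ∀ j : ℕ, μ ≠ (((m.natAbs + 2 * j : ℕ) : ℝ) * (((m.natAbs + 2 * j : ℕ) : ℝ) + 2)
      - (m : ℝ) ^ 2) / 4) (a b c e : ℕ) : moment f a b c e = 0 := by
  refine hf.moment_eq_zero_of_critical (fun a b c e hcrit _ => ?_) a b c e
  refine hf.moment_eq_zero_of_weight fun hw => ?_
  refine hμ ((a + b + c + e - m.natAbs) / 2) ?_
  rw [show m.natAbs + 2 * ((a + b + c + e - m.natAbs) / 2) = a + b + c + e by omega, hcrit]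
  ring

/-- The moments against the monomials `z₁ᵃ z̄₁ᵇ z₂ᶜ z̄₂ᵉ` with `a = 0` or `b = 0`, `a + e = B` and
`b + c = A`. -/
def normalMoment (A B : ℕ) (f : E4 → ℂ) (k : Fin (A + B + 1)) : ℂ :=
  moment f (k - A) (A - k) (A - (A - k)) (B - (k - A))

lemma IsEigenSection.moment_eq_zero_of_normalMoment {A B : ℕ} {m : ℤ} (hm : m = A - B) {μ : ℝ}
    (hμ : μ = (((A + B : ℕ) : ℝ) * (((A + B : ℕ) : ℝ) + 2) - (m : ℝ) ^ 2) / 4) {f : E4 → ℂ}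
    (hf : IsEigenSection m μ f) (h0 : normalMoment A B f = 0) (a b c e : ℕ) :
    moment f a b c e = 0 := by
  have hnormal : ∀ a b c e : ℕ, a + b + c + e = A + B → a = 0 ∨ b = 0 → moment f a b c e = 0 := by
    intro a b c e hd hab
    by_cases hw : (a : ℤ) + e - b - c + m = 0
    · have h := congrFun h0 ⟨A + a - b, by omega⟩
      simp only [normalMoment, Pi.zero_apply] at h
      convert h using 2 <;> omega
    · exact hf.moment_eq_zero_of_weight hw
  refine hf.moment_eq_zero_of_critical (fun a b c e hcrit hlow => ?_) a b c e
  have hd : a + b + c + e = A + B := by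
    have h1 : ((a + b + c + e : ℕ) : ℝ) * ((a + b + c + e : ℕ) + 2)
        = ((A + B : ℕ) : ℝ) * (((A + B : ℕ) : ℝ) + 2) := by
      rw [hcrit, hμ]
      ring
    have h2 : (a + b + c + e) * (a + b + c + e + 2) = (A + B) * (A + B + 2) := by exact_mod_cast h1
    nlinarith [h2]
  rw [hd] at hlow
  clear hcrit
  induction a generalizing b c e with
  | zero => exact hnormal _ _ _ _ hd (Or.inl rfl)
  | succ a ih =>
    cases b with
    | zero => exact hnormal _ _ _ _ hd (Or.inr rfl)
    | succ b =>
      have h := moment_add hf.continuousAt a b c e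
      rw [ih b (c + 1) (e + 1) (by omega), hlow a b c e (by omega), add_zero] at h
      exact h

lemma span_zMonomial_eq_top :
    Submodule.span ℂ {p | ∃ a b c e, zMonomial a b c e = p} = ⊤ := by
  set V := Submodule.span ℂ {p | ∃ a b c e, zMonomial a b c e = p} with hV
  have hmem : ∀ a b c e, zMonomial a b c e ∈ V := fun a b c e =>
    Submodule.subset_span ⟨a, b, c, e, rfl⟩
  have hX : ∀ (i : Fin 4) (a b c e : ℕ), zMonomial a b c e * X i ∈ V := by
    have h0 : ∀ a b c e : ℕ, (2 : ℂ) • (zMonomial a b c e * X 0)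
        = zMonomial (a + 1) b c e + zMonomial a (b + 1) c e := by
      intro a b c e
      simp only [zMonomial, polyZ₁, polyZ₁bar, smul_eq_C_mul, map_ofNat]
      ring
    have h1 : ∀ a b c e : ℕ, (2 * Complex.I : ℂ) • (zMonomial a b c e * X 1)
        = zMonomial (a + 1) b c e - zMonomial a (b + 1) c e := by
      intro a b c e
      simp only [zMonomial, polyZ₁, polyZ₁bar, smul_eq_C_mul, map_mul, map_ofNat]
      ring
    have h2 : ∀ a b c e : ℕ, (2 : ℂ) • (zMonomial a b c e * X 2)
        = zMonomial a b (c + 1) e + zMonomial a b c (e + 1) := by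
      intro a b c e
      simp only [zMonomial, polyZ₂, polyZ₂bar, smul_eq_C_mul, map_ofNat]
      ring
    have h3 : ∀ a b c e : ℕ, (2 * Complex.I : ℂ) • (zMonomial a b c e * X 3)
        = zMonomial a b (c + 1) e - zMonomial a b c (e + 1) := by
      intro a b c e
      simp only [zMonomial, polyZ₂, polyZ₂bar, smul_eq_C_mul, map_mul, map_ofNat]
      ring
    intro i a b c e
    fin_cases i
    · exact (V.smul_mem_iff (by simp)).mp (h0 a b c e ▸ V.add_mem (hmem _ _ _ _) (hmem _ _ _ _))
    · exact (V.smul_mem_iff (by simp)).mp (h1 a b c e ▸ V.sub_mem (hmem _ _ _ _) (hmem _ _ _ _))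
    · exact (V.smul_mem_iff (by simp)).mp (h2 a b c e ▸ V.add_mem (hmem _ _ _ _) (hmem _ _ _ _))
    · exact (V.smul_mem_iff (by simp)).mp (h3 a b c e ▸ V.sub_mem (hmem _ _ _ _) (hmem _ _ _ _))
  refine (Submodule.eq_top_iff').mpr fun p => ?_
  induction p using MvPolynomial.induction_on with
  | C a =>
    have h : C a = a • zMonomial 0 0 0 0 := by simp [zMonomial, smul_eq_C_mul]
    exact h ▸ V.smul_mem a (hmem 0 0 0 0)
  | add p q hp hq => exact V.add_mem hp hq
  | mul_X p i hp =>
    refine Submodule.span_induction (p := fun q _ => q * X i ∈ V) ?_ ?_ ?_ ?_ hp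
    · rintro _ ⟨a, b, c, e, rfl⟩
      exact hX i a b c e
    · simp
    · intro q r _ _ hq hr
      rw [add_mul]
      exact V.add_mem hq hr
    · intro r q _ hq
      rw [smul_mul_assoc]
      exact V.smul_mem r hq

/-- Polynomials restrict to a dense set of functions on the unit sphere. -/
lemma exists_polyEval_near {g : E4 → ℂ} (hg : ∀ x, x ≠ 0 → ContinuousAt g x) {ε : ℝ} (hε : 0 < ε) :
    ∃ q : MvPolynomial (Fin 4) ℂ, ∀ x : E4, ‖x‖ = 1 → ‖g x - polyEval x q‖ < ε := by
  let φ : MvPolynomial (Fin 4) ℂ →ₐ[ℂ] C(Metric.sphere (0 : E4) 1, ℂ) :=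
    MvPolynomial.aeval fun i => ⟨fun x => (((x : E4) i : ℝ) : ℂ), by fun_prop⟩
  have hφ : ∀ q x, φ q x = polyEval (x : E4) q := by
    intro q x
    induction q using MvPolynomial.induction_on with
    | C a => simp [φ]
    | add p q hp hq => simp [hp, hq]
    | mul_X p i hp => simp [hp, φ, polyEval_X]
  let S : StarSubalgebra ℂ C(Metric.sphere (0 : E4) 1, ℂ) :=
    { φ.range with
      star_mem' := by
        rintro _ ⟨q, rfl⟩
        refine ⟨MvPolynomial.map (starRingEnd ℂ) q, ?_⟩
        ext x
        rw [ContinuousMap.star_apply]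
        change φ _ x = star (φ q x)
        rw [hφ, hφ]
        induction q using MvPolynomial.induction_on with
        | C a => simp
        | add p q hp hq => simp [hp, hq]
        | mul_X p i hp => simp [hp, polyEval_X] }
  have hS : S.SeparatesPoints := by
    intro x y hxy
    by_contra hcon
    refine hxy (Subtype.ext (PiLp.ext fun i => ?_))
    have hi : φ (X i) x = φ (X i) y := by
      by_contra hne
      exact hcon ⟨φ (X i), ⟨φ (X i), ⟨X i, rfl⟩, rfl⟩, hne⟩
    simpa [hφ, polyEval_X] using hi
  have htop := ContinuousMap.starSubalgebra_topologicalClosure_eq_top_of_separatesPoints S hS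
  let G : C(Metric.sphere (0 : E4) 1, ℂ) := ⟨fun x => g x, continuous_iff_continuousAt.mpr fun x =>
    (hg x (by
      intro h0
      simpa [h0] using mem_sphere_zero_iff_norm.mp x.2)).comp continuous_subtype_val.continuousAt⟩
  have hG : G ∈ closure (S : Set C(Metric.sphere (0 : E4) 1, ℂ)) := by
    rw [← StarSubalgebra.topologicalClosure_coe, htop]
    trivial
  obtain ⟨_, ⟨q, rfl⟩, hq⟩ := Metric.mem_closure_iff.mp hG ε hε
  refine ⟨q, fun x hx => ?_⟩
  have h := (ContinuousMap.dist_apply_le_dist (⟨x, mem_sphere_zero_iff_norm.mpr hx⟩)).trans_lt hq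
  rw [dist_eq_norm] at h
  simpa [G, hφ] using h

lemma integral_polyEval_eq_zero_of_moment {f : E4 → ℂ} (hf : ∀ x, x ≠ 0 → ContinuousAt f x)
    (h0 : ∀ a b c e, moment f a b c e = 0) (q : MvPolynomial (Fin 4) ℂ) :
    MeasureTheory.Integrable (fun x => radialCutoff x *
      (f x * (polyEval (‖x‖⁻¹ • x) q * invNormPow 2 x))) ∧
    ∫ x, radialCutoff x * (f x * (polyEval (‖x‖⁻¹ • x) q * invNormPow 2 x)) = 0 := by
  have hint : ∀ q, MeasureTheory.Integrable (fun x => radialCutoff x *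
      (f x * (polyEval (‖x‖⁻¹ • x) q * invNormPow 2 x))) := by
    refine fun q => integrable_radialCutoff_mul fun x hx => (hf x hx).mul (ContinuousAt.mul ?_
      (contDiffAt_invNormPow 2 hx (n := 0)).continuousAt)
    refine ((contDiff_polyEval q (n := 0)).continuous.continuousAt).comp
      (f := fun x : E4 => ‖x‖⁻¹ • x) ?_
    exact (continuous_norm.continuousAt.inv₀ (norm_ne_zero_iff.mpr hx)).smul continuousAt_id
  refine ⟨hint q, ?_⟩
  have hq : q ∈ Submodule.span ℂ {p | ∃ a b c e, zMonomial a b c e = p} :=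
    span_zMonomial_eq_top ▸ Submodule.mem_top
  induction hq using Submodule.span_induction with
  | mem q hq =>
    obtain ⟨a, b, c, e, rfl⟩ := hq
    rw [← h0 a b c e, moment]
    congr 1
    funext x
    rw [polyEval_smul (isHomogeneous_zMonomial a b c e)]
    simp only [invNormPow]
    push_cast
    ring
  | zero => simp
  | add q r _ _ hq hr =>
    simp only [map_add, add_mul, mul_add]
    rw [MeasureTheory.integral_add (hint q) (hint r), hq, hr, add_zero]
  | smul t q _ hq =>
    rw [← mul_zero t, ← hq, ← MeasureTheory.integral_const_mul]
    congr 1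
    funext x
    simp only [map_smul, smul_eq_mul]
    ring

lemma eq_zero_of_moment {f : E4 → ℂ} (hf : ∀ x, x ≠ 0 → ContinuousAt f x)
    (hhom : ∀ c : ℝ, 0 < c → ∀ x : E4, f (c • x) = f x)
    (h0 : ∀ a b c e, moment f a b c e = 0) {x : E4} (hx : ‖x‖ = 1) : f x = 0 := by
  by_contra hne
  let H : E4 → ℝ := fun y => ‖radialCutoff y * (f y * (star (f y) * invNormPow 2 y))‖
  have hHeq : ∀ y, radialCutoff y * (f y * (star (f y) * invNormPow 2 y)) = ((H y : ℝ) : ℂ) := by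
    intro y
    obtain ⟨r, hr, hry⟩ := radialCutoff_nonneg y
    have : radialCutoff y * (f y * (star (f y) * invNormPow 2 y))
        = ((r * (Complex.normSq (f y) * (‖y‖ ^ 2)⁻¹) : ℝ) : ℂ) := by
      rw [hry, invNormPow]
      push_cast
      rw [Complex.normSq_eq_conj_mul_self]
      simp only [Complex.star_def]
      ring
    simp only [H]
    rw [this, Complex.norm_real, Real.norm_of_nonneg]
    have := Complex.normSq_nonneg (f y)
    positivity
  have hcont : ∀ y, y ≠ 0 → ContinuousAt (fun y => f y * (star (f y) * invNormPow 2 y)) y :=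
    fun y hy => (hf y hy).mul ((hf y hy).star.mul
      (contDiffAt_invNormPow 2 hy (n := 0)).continuousAt)
  have hpos : 0 < ∫ y, H y := by
    refine Continuous.integral_pos_of_hasCompactSupport_nonneg_nonzero (x := x)
      (continuous_radialCutoff_mul hcont).norm (hasCompactSupport_radialCutoff_mul _).norm
      (fun y => norm_nonneg _) ?_
    simp [H, radialCutoff_of_norm_eq_one hx, invNormPow, hx, hne]
  have hK : MeasureTheory.Integrable fun y => radialCutoff y * (f y * invNormPow 2 y) :=
    integrable_radialCutoff_mul fun y hy => (hf y hy).mul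
      (contDiffAt_invNormPow 2 hy (n := 0)).continuousAt
  set K := ∫ y, ‖radialCutoff y * (f y * invNormPow 2 y)‖ with hKdef
  have hKnn : 0 ≤ K := MeasureTheory.integral_nonneg fun y => norm_nonneg _
  have hle : ∀ ε : ℝ, 0 < ε → ∫ y, H y ≤ ε * K := by
    intro ε hε
    obtain ⟨q, hq⟩ := exists_polyEval_near (g := fun y => star (f y))
      (fun y hy => (hf y hy).star) hε
    obtain ⟨hqi, hq0⟩ := integral_polyEval_eq_zero_of_moment hf h0 q
    have h1 : ((∫ y, H y : ℝ) : ℂ) = ∫ y, (radialCutoff y * (f y * (star (f y) * invNormPow 2 y))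
        - radialCutoff y * (f y * (polyEval (‖y‖⁻¹ • y) q * invNormPow 2 y))) := by
      rw [MeasureTheory.integral_sub (integrable_radialCutoff_mul hcont) hqi, hq0, sub_zero]
      simp only [hHeq]
      exact integral_complex_ofReal.symm
    have h2 : ‖((∫ y, H y : ℝ) : ℂ)‖ ≤ ε * K := by
      rw [h1, hKdef, ← MeasureTheory.integral_const_mul]
      refine MeasureTheory.norm_integral_le_of_norm_le (hK.norm.const_mul ε)
        (Filter.Eventually.of_forall fun y => ?_)
      rcases eq_or_ne y 0 with rfl | hy
      · simp [radialCutoff_zero]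
      have h3 := (hq (‖y‖⁻¹ • y) (norm_smul_inv_norm (𝕜 := ℝ) hy)).le
      rw [hhom _ (inv_pos.mpr (norm_pos_iff.mpr hy))] at h3
      rw [show radialCutoff y * (f y * (star (f y) * invNormPow 2 y))
          - radialCutoff y * (f y * (polyEval (‖y‖⁻¹ • y) q * invNormPow 2 y))
          = (star (f y) - polyEval (‖y‖⁻¹ • y) q)
            * (radialCutoff y * (f y * invNormPow 2 y)) by ring,
        norm_mul]
      gcongr
    rw [Complex.norm_real, Real.norm_of_nonneg hpos.le] at h2
    exact h2
  have h4 := hle ((∫ y, H y) / (2 * (K + 1))) (by positivity)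
  have h5 : (∫ y, H y) / (2 * (K + 1)) * K < ∫ y, H y := by
    rw [div_mul_eq_mul_div, div_lt_iff₀ (by positivity)]
    nlinarith
  exact absurd h4 (not_le.mpr h5)

lemma lap4_add {f g : E4 → ℂ} (hf : ∀ x, x ≠ 0 → ContDiffAt ℝ (⊤ : ℕ∞) f x)
    (hg : ∀ x, x ≠ 0 → ContDiffAt ℝ (⊤ : ℕ∞) g x) {x : E4} (hx : x ≠ 0) :
    lap4 (f + g) x = lap4 f x + lap4 g x := by
  have hD : ∀ {u : E4 → ℂ}, (∀ x, x ≠ 0 → ContDiffAt ℝ (⊤ : ℕ∞) u x) → ∀ v : E4,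
      DifferentiableAt ℝ (fun y => fderiv ℝ u y v) x := fun hu v =>
    (((hu x hx).fderiv_right (m := 1) (by norm_cast)).clm_apply contDiffAt_const).differentiableAt
      (by simp)
  simp only [lap4, ← Finset.sum_add_distrib]
  refine Finset.sum_congr rfl fun i _ => ?_
  set v : E4 := EuclideanSpace.single i 1
  have h : (fun y => fderiv ℝ (f + g) y v) =ᶠ[nhds x] fun y => fderiv ℝ f y v + fderiv ℝ g y v := by
    filter_upwards [isOpen_ne.mem_nhds hx] with y hy
    rw [fderiv_add ((hf y hy).differentiableAt (by simp)) ((hg y hy).differentiableAt (by simp)),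
      add_apply]
  rw [h.fderiv_eq, fderiv_fun_add (hD hf v) (hD hg v), add_apply]

lemma lap4_const_smul (r : ℂ) (f : E4 → ℂ) (x : E4) : lap4 (r • f) x = r * lap4 f x := by
  simp only [lap4, Finset.mul_sum]
  refine Finset.sum_congr rfl fun i _ => ?_
  set v : E4 := EuclideanSpace.single i 1
  have h : (fun y => fderiv ℝ (r • f) y v) = r • fun y => fderiv ℝ f y v := by
    funext y
    rw [fderiv_const_smul_field]
    rfl
  rw [h, fderiv_const_smul_field]
  rfl

/-- The space of eigensections of `H^m` with eigenvalue `μ`. -/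
def eigenSections (m : ℤ) (μ : ℝ) : Submodule ℂ (E4 → ℂ) where
  carrier := {f | IsEigenSection m μ f}
  add_mem' {f g} hf hg := by
    refine ⟨hf.1.add hg.1, fun c hc x => ?_, fun s x => ?_, fun x hx => ?_⟩
    · simp only [Pi.add_apply, hf.2.1 c hc, hg.2.1 c hc]
    · simp only [Pi.add_apply, hf.2.2.1, hg.2.2.1, mul_add]
    · have hx0 : x ≠ 0 := norm_ne_zero_iff.mp (hx ▸ one_ne_zero)
      rw [lap4_add (fun _ h => hf.contDiffAt h) (fun _ h => hg.contDiffAt h) hx0, Pi.add_apply]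
      linear_combination hf.2.2.2 x hx + hg.2.2.2 x hx
  zero_mem' := by
    refine ⟨contDiffOn_const, fun c hc x => rfl, fun s x => by simp, fun x hx => ?_⟩
    have h := lap4_const_smul 0 0 x
    rw [zero_smul, zero_mul] at h
    simp [h]
  smul_mem' r f hf := by
    refine ⟨contDiffOn_const.smul hf.1, fun c hc x => ?_, fun s x => ?_, fun x hx => ?_⟩
    · simp only [Pi.smul_apply, hf.2.1 c hc]
    · simp only [Pi.smul_apply, hf.2.2.1, smul_eq_mul]
      ring
    · rw [lap4_const_smul, Pi.smul_apply, smul_eq_mul]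
      linear_combination r * hf.2.2.2 x hx

/-- The normal moments, as a linear map on eigensections. -/
def normalMomentMap (A B : ℕ) (m : ℤ) (μ : ℝ) :
    eigenSections m μ →ₗ[ℂ] (Fin (A + B + 1) → ℂ) where
  toFun f := normalMoment A B f
  map_add' f g := by
    funext k
    exact moment_fun_add (IsEigenSection.continuousAt f.2) (IsEigenSection.continuousAt g.2) _ _ _ _
  map_smul' r f := by
    funext k
    exact moment_fun_smul r f _ _ _ _

lemma exists_eq_sum_harmonicSection {A B : ℕ} {m : ℤ} (hm : m = A - B) {μ : ℝ}
    (hμ : μ = (((A + B : ℕ) : ℝ) * (((A + B : ℕ) : ℝ) + 2) - (m : ℝ) ^ 2) / 4) {f : E4 → ℂ}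
    (hf : IsEigenSection m μ f) :
    ∃ c : Fin (A + B + 1) → ℂ, ∀ x : E4, ‖x‖ = 1 →
      f x = ∑ i, c i * harmonicSection A B (i : ℕ) x := by
  let b : Fin (A + B + 1) → eigenSections m μ := fun i =>
    ⟨harmonicSection A B (i : ℕ), isEigenSection_harmonicSection A B _ hm hμ⟩
  have hker : ∀ g : eigenSections m μ, normalMomentMap A B m μ g = 0 →
      ∀ x : E4, ‖x‖ = 1 → (g : E4 → ℂ) x = 0 := fun g hg x hx =>
    eq_zero_of_moment (IsEigenSection.continuousAt g.2) g.2.2.1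
      (IsEigenSection.moment_eq_zero_of_normalMoment hm hμ g.2 hg) hx
  have hsum : ∀ (c : Fin (A + B + 1) → ℂ) (x : E4),
      ((∑ i, c i • b i : eigenSections m μ) : E4 → ℂ) x
        = ∑ i, c i * harmonicSection A B (i : ℕ) x := by
    intro c x
    simp [b]
  have hli : LinearIndependent ℂ fun i => normalMomentMap A B m μ (b i) := by
    rw [Fintype.linearIndependent_iff]
    intro c hc
    refine Fintype.linearIndependent_iff.mp (linearIndependent_harmonicSection A B) c ?_
    funext x
    have h := hker (∑ i, c i • b i) (by simpa using hc) x (mem_sphere_zero_iff_norm.mp x.2)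
    rw [hsum] at h
    simpa using h
  have hspan := hli.span_eq_top_of_card_eq_finrank (by simp)
  obtain ⟨c, hc⟩ := (Submodule.mem_span_range_iff_exists_fun ℂ).mp
    (hspan ▸ Submodule.mem_top (x := normalMomentMap A B m μ ⟨f, hf⟩))
  refine ⟨c, fun x hx => ?_⟩
  have h := hker (⟨f, hf⟩ - ∑ i, c i • b i) (by
    rw [map_sub, map_sum, ← hc]
    simp) x hx
  rw [← hsum, ← sub_eq_zero]
  exact h

/-- The eigenvalues of the Laplacian `∇_A^*∇_A` of the SO(3)-invariant
connection `m A₀` on `H^m → S²` are `(l(l+2) − m²)/4`, `l = |m| + 2j`, `j = 0, 1, 2, …`,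
each with multiplicity `l + 1`. -/
theorem eigenvalues_laplacian_hopf_bundle (m : ℤ) :
    (∀ μ : ℝ,
      (∃ f, IsEigenSection m μ f ∧ ∃ x : E4, ‖x‖ = 1 ∧ f x ≠ 0) ↔
      (∃ j : ℕ, μ = (((m.natAbs + 2 * j : ℕ) : ℝ) * (((m.natAbs + 2 * j : ℕ) : ℝ) + 2)
          - (m : ℝ) ^ 2) / 4)) ∧
    (∀ j : ℕ,
      ∃ b : Fin (m.natAbs + 2 * j + 1) → E4 → ℂ,
        (∀ i, IsEigenSection m
          ((((m.natAbs + 2 * j : ℕ) : ℝ) * (((m.natAbs + 2 * j : ℕ) : ℝ) + 2)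
            - (m : ℝ) ^ 2) / 4) (b i)) ∧
        LinearIndependent ℂ (fun i => fun x : Metric.sphere (0 : E4) 1 => b i (x : E4)) ∧
        (∀ f, IsEigenSection m
            ((((m.natAbs + 2 * j : ℕ) : ℝ) * (((m.natAbs + 2 * j : ℕ) : ℝ) + 2)
              - (m : ℝ) ^ 2) / 4) f →
          ∃ c : Fin (m.natAbs + 2 * j + 1) → ℂ,
            ∀ x : E4, ‖x‖ = 1 → f x = ∑ i, c i * b i x)) := by
  have hAB : ∀ j : ℕ, ∃ A B : ℕ, m.natAbs + 2 * j = A + B ∧ m = A - B := fun j =>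
    ⟨((m.natAbs + 2 * j + m) / 2).toNat, ((m.natAbs + 2 * j - m) / 2).toNat, by omega, by omega⟩
  refine ⟨fun μ => ⟨?_, ?_⟩, fun j => ?_⟩
  · rintro ⟨f, hf, x, hx, hfx⟩
    by_contra! hcon
    exact hfx (eq_zero_of_moment hf.continuousAt hf.2.1 (hf.moment_eq_zero_of_forall_ne hcon) hx)
  · rintro ⟨j, hμ⟩
    obtain ⟨A, B, hl, hm⟩ := hAB j
    rw [hl] at hμ
    refine ⟨_, isEigenSection_harmonicSection A B ((0 : Fin (A + B + 1)) : ℕ) hm hμ, ?_⟩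
    obtain ⟨x, hx⟩ := Function.ne_iff.mp ((linearIndependent_harmonicSection A B).ne_zero 0)
    exact ⟨x, mem_sphere_zero_iff_norm.mp x.2, hx⟩
  · obtain ⟨A, B, hl, hm⟩ := hAB j
    rw [hl]
    exact ⟨fun i => harmonicSection A B (i : ℕ),
      fun i => isEigenSection_harmonicSection A B _ hm rfl, linearIndependent_harmonicSection A B,
      fun f hf => exists_eq_sum_harmonicSection hm rfl hf⟩

end
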